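/- Let (X,𝔸,μ) be a measure space, τ : X → X a non-singular measurable transformation, φ an Orlicz function satisfying the Δ₂-condition for all s > 0, and h a weight function on K = [0, μ(X)]. Then for every measurable set A ∈ 𝔸 with 0 < μ(A) < ∞ the following are equivalent: (a) there exists k > 0 such that for all n ∈ ℕ, 1/φ⁻¹(1/∫₀^{μ(τ⁻ⁿ(A))} h(t) dt) ≤ k · (1/φ⁻¹(1/∫₀^{μ(A)} h(t) dt)); (b) there exists k > 0 such that for all n ∈ ℕ, ∫₀^{μ(τ⁻ⁿ(A))} h(t) dt ≤ k ∫₀^{μ(A)} h(t) dt. -/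

import Mathlib

/-!
Put `W₀ = ∫₀^{μ(A)} h`, which lies in `(0, ∞)` because `0 < μ(A) < ∞`, and let `W` be the same
integral up to `μ(τ⁻ⁿ(A))`, which may be `0` or `∞`. The two conditions are compared for each `n`
separately, with constants depending only on `k`, `φ` and `W₀`.

* `inv_orliczInv_le`: convexity and `φ(0) = 0` give `φ(s / k) ≤ φ(s) / k` for `k ≥ 1`, so that
  `φ⁻¹(u) ≤ k φ⁻¹(u / k)`. Hence `W ≤ k W₀` gives `1/φ⁻¹(1/W) ≤ k / φ⁻¹(1/W₀)`.
* `weight_le_of_inv_orliczInv_le`: iterating the Δ₂-condition, `φ(2ᵐ s) ≤ Mᵐ φ(s)`.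
  With `s₀ = φ⁻¹(1/W₀)` and `s₁ = 2 s₀ / 2ᵐ < s₀ / k`, the inequality `s₀ / k ≤ φ⁻¹(1/W)` yields
  `1/W₀ ≤ φ(2 s₀) ≤ Mᵐ φ(s₁) ≤ Mᵐ / W`.

The exponent `m` depends only on `k`, so both constants are uniform in `n`.
-/


open MeasureTheory Filter Set
open scoped ENNReal NNReal

noncomputable section

/-- The generalized inverse `φ⁻¹(u) = sup {s ≥ 0 : φ(s) ≤ u}` of an Orlicz function. -/
def orliczInv (φ : ℝ≥0∞ → ℝ≥0∞) (u : ℝ≥0∞) : ℝ≥0∞ :=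
  ⨆ (s : ℝ≥0) (_ : φ (s : ℝ≥0∞) ≤ u), (s : ℝ≥0∞)

/-- An Orlicz function: convex on `[0,∞)` (viewed inside `ℝ≥0∞`), vanishing at `0`,
tending to `∞` at `∞`, and finite at some positive point. -/
structure IsOrliczFunction (φ : ℝ≥0∞ → ℝ≥0∞) : Prop where
  map_zero : φ 0 = 0
  convex : ∀ (x y a b : ℝ≥0), a + b = 1 →
    φ ((a * x + b * y : ℝ≥0) : ℝ≥0∞) ≤ (a : ℝ≥0∞) * φ (x : ℝ≥0∞) + (b : ℝ≥0∞) * φ (y : ℝ≥0∞)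
  tendsto_top : Filter.Tendsto (fun s : ℝ≥0 => φ (s : ℝ≥0∞)) Filter.atTop (nhds ⊤)
  exists_pos_finite : ∃ s : ℝ≥0, 0 < s ∧ φ (s : ℝ≥0∞) < ⊤

/-- The Δ₂-condition for all `s > 0`: `φ(2s) ≤ M φ(s)` for some constant `M > 0`. -/
def Delta2All (φ : ℝ≥0∞ → ℝ≥0∞) : Prop :=
  ∃ M : ℝ≥0, 0 < M ∧ ∀ s : ℝ≥0, 0 < s →
    φ ((2 * s : ℝ≥0) : ℝ≥0∞) ≤ (M : ℝ≥0∞) * φ (s : ℝ≥0∞)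

variable {X : Type*}

/-- A weight function on `K = [0, μ(X)]`: measurable, positive, finite,
non-increasing and locally integrable on `K`. -/
structure IsWeight [MeasurableSpace X] (μ : Measure X) (h : ℝ → ℝ≥0∞) : Prop where
  measurable : Measurable h
  pos : ∀ t : ℝ, 0 ≤ t → ENNReal.ofReal t ≤ μ Set.univ → 0 < h t
  lt_top : ∀ t : ℝ, 0 ≤ t → ENNReal.ofReal t ≤ μ Set.univ → h t < ⊤
  antitone : ∀ s t : ℝ, 0 ≤ s → s ≤ t → ENNReal.ofReal t ≤ μ Set.univ → h t ≤ h s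
  locally_integrable : ∀ c : ℝ, 0 ≤ c → ENNReal.ofReal c ≤ μ Set.univ →
    (∫⁻ t in Set.Ioc (0 : ℝ) c, h t) < ⊤

/-- `∫₀^c h(t) dt`, for an extended-real upper limit `c`. -/
def weightInt (h : ℝ → ℝ≥0∞) (c : ℝ≥0∞) : ℝ≥0∞ :=
  ∫⁻ t in {t : ℝ | 0 < t ∧ ENNReal.ofReal t < c}, h t

/-- The non-increasing rearrangement `g*(t) = inf {λ : μ(|g| > λ) ≤ t}`. -/
def decRearr [MeasurableSpace X] (μ : Measure X) (g : X → ℝ) (t : ℝ) : ℝ≥0∞ :=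
  sInf {l : ℝ≥0∞ | μ {x | l < ENNReal.ofReal |g x|} ≤ ENNReal.ofReal t}

/-- The Orlicz–Lorentz modular `I_{φ,h}(c·g) = ∫_K φ(c g*(t)) h(t) dt`, `K = [0, μ(X)]`. -/
def olModular [MeasurableSpace X] (φ : ℝ≥0∞ → ℝ≥0∞) (h : ℝ → ℝ≥0∞) (μ : Measure X)
    (g : X → ℝ) (c : ℝ≥0∞) : ℝ≥0∞ :=
  ∫⁻ t in {t : ℝ | 0 < t ∧ ENNReal.ofReal t < μ Set.univ}, φ (c * decRearr μ g t) * h t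

/-- The Orlicz–Lorentz (Luxemburg) norm `‖g‖_{φ,h} = inf {λ > 0 : I_{φ,h}(g/λ) ≤ 1}`. -/
def olNorm [MeasurableSpace X] (φ : ℝ≥0∞ → ℝ≥0∞) (h : ℝ → ℝ≥0∞) (μ : Measure X)
    (g : X → ℝ) : ℝ≥0∞ :=
  sInf {l : ℝ≥0∞ | 0 < l ∧ olModular φ h μ g l⁻¹ ≤ 1}

/-- Membership in the Orlicz–Lorentz space `L^{φ,h}(μ)`. -/
def MemOL [MeasurableSpace X] (φ : ℝ≥0∞ → ℝ≥0∞) (h : ℝ → ℝ≥0∞) (μ : Measure X)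
    (g : X → ℝ) : Prop :=
  AEMeasurable g μ ∧ ∃ c : ℝ≥0, 0 < c ∧ olModular φ h μ g (c : ℝ≥0∞) < ⊤

/-- A non-singular measurable transformation: `μ(A) = 0 → μ(τ⁻¹(A)) = 0`. -/
def NonSingular [MeasurableSpace X] (μ : Measure X) (τ : X → X) : Prop :=
  Measurable τ ∧ ∀ A : Set X, MeasurableSet A → μ A = 0 → μ (τ ⁻¹' A) = 0

/-- The composition operator `C_τ g = g ∘ τ` is a bounded linear operator on `L^{φ,h}(μ)`. -/
def CompBoundedOL [MeasurableSpace X] (φ : ℝ≥0∞ → ℝ≥0∞) (h : ℝ → ℝ≥0∞) (μ : Measure X)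
    (τ : X → X) : Prop :=
  (∀ g : X → ℝ, MemOL φ h μ g → MemOL φ h μ (g ∘ τ)) ∧
  ∃ M : ℝ≥0∞, M < ⊤ ∧ ∀ g : X → ℝ, MemOL φ h μ g →
    olNorm φ h μ (g ∘ τ) ≤ M * olNorm φ h μ g

/-- `C_τ` is Li-Yorke chaotic on `L^{φ,h}(μ)`: there is an uncountable set `S` of
(representatives of pairwise distinct) points of `L^{φ,h}(μ)` such that every pair of
distinct points of `S` is a Li-Yorke pair for `C_τ`. -/
def LiYorkeOL [MeasurableSpace X] (φ : ℝ≥0∞ → ℝ≥0∞) (h : ℝ → ℝ≥0∞) (μ : Measure X)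
    (τ : X → X) : Prop :=
  ∃ S : Set (X → ℝ),
    (∀ g ∈ S, MemOL φ h μ g) ∧
    ¬ S.Countable ∧
    (∀ p ∈ S, ∀ q ∈ S, p ≠ q → ¬ p =ᵐ[μ] q) ∧
    ∀ p ∈ S, ∀ q ∈ S, p ≠ q →
      Filter.liminf (fun n : ℕ => olNorm φ h μ ((p - q) ∘ τ^[n])) Filter.atTop = 0 ∧
      0 < Filter.limsup (fun n : ℕ => olNorm φ h μ ((p - q) ∘ τ^[n])) Filter.atTop

/-- `g` is a semi-irregular vector for `C_τ` on `L^{φ,h}(μ)`. -/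
def SemiIrregularOL [MeasurableSpace X] (φ : ℝ≥0∞ → ℝ≥0∞) (h : ℝ → ℝ≥0∞) (μ : Measure X)
    (τ : X → X) (g : X → ℝ) : Prop :=
  MemOL φ h μ g ∧
  Filter.liminf (fun n : ℕ => olNorm φ h μ (g ∘ τ^[n])) Filter.atTop = 0 ∧
  0 < Filter.limsup (fun n : ℕ => olNorm φ h μ (g ∘ τ^[n])) Filter.atTop

lemma IsOrliczFunction.map_mul_le {φ : ℝ≥0∞ → ℝ≥0∞} (hφ : IsOrliczFunction φ)
    (a s : ℝ≥0) (ha : a ≤ 1) : φ ((a * s : ℝ≥0) : ℝ≥0∞) ≤ a * φ s := by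
  have h := hφ.convex s 0 a (1 - a) (add_tsub_cancel_of_le ha)
  simpa [hφ.map_zero] using h

lemma IsOrliczFunction.mono {φ : ℝ≥0∞ → ℝ≥0∞} (hφ : IsOrliczFunction φ)
    {s t : ℝ≥0} (hst : s ≤ t) : φ s ≤ φ t := by
  rcases eq_or_ne t 0 with rfl | ht
  · rw [nonpos_iff_eq_zero.mp hst]
  · have ha : s / t ≤ 1 := div_le_one_of_le₀ hst zero_le
    have h := hφ.map_mul_le (s / t) t ha
    rw [div_mul_cancel₀ s ht] at h
    calc φ s ≤ ((s / t : ℝ≥0) : ℝ≥0∞) * φ t := h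
      _ ≤ 1 * φ t := by gcongr; exact_mod_cast ha
      _ = φ t := one_mul _

lemma le_orliczInv {φ : ℝ≥0∞ → ℝ≥0∞} {u : ℝ≥0∞} {s : ℝ≥0} (h : φ s ≤ u) :
    (s : ℝ≥0∞) ≤ orliczInv φ u :=
  le_iSup₂_of_le s h le_rfl

lemma le_of_lt_orliczInv {φ : ℝ≥0∞ → ℝ≥0∞} (hφ : IsOrliczFunction φ) {u : ℝ≥0∞} {s : ℝ≥0}
    (h : (s : ℝ≥0∞) < orliczInv φ u) : φ s ≤ u := by
  obtain ⟨t, ht⟩ := lt_iSup_iff.mp h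
  obtain ⟨ht, hst⟩ := lt_iSup_iff.mp ht
  exact (hφ.mono (by exact_mod_cast hst.le)).trans ht

lemma orliczInv_ne_top {φ : ℝ≥0∞ → ℝ≥0∞} (hφ : IsOrliczFunction φ) {u : ℝ≥0∞} (hu : u ≠ ⊤) :
    orliczInv φ u ≠ ⊤ := by
  intro h
  obtain ⟨s, hs⟩ := (hφ.tendsto_top.eventually (lt_mem_nhds hu.lt_top)).exists
  exact absurd (le_of_lt_orliczInv hφ (h ▸ ENNReal.coe_lt_top)) hs.not_ge

lemma orliczInv_ne_zero {φ : ℝ≥0∞ → ℝ≥0∞} (hφ : IsOrliczFunction φ) {u : ℝ≥0∞} (hu : u ≠ 0) :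
    orliczInv φ u ≠ 0 := by
  obtain ⟨s, hs, hfin⟩ := hφ.exists_pos_finite
  obtain ⟨a, ha, hau⟩ := ENNReal.exists_nnreal_pos_mul_lt hfin.ne hu
  have hb : 0 < min a 1 := lt_min ha one_pos
  have h : φ ((min a 1 * s : ℝ≥0) : ℝ≥0∞) ≤ u := by
    refine (hφ.map_mul_le _ s (min_le_right _ _)).trans (le_trans ?_ hau.le)
    gcongr
    exact min_le_left _ _
  have h2 := le_orliczInv h
  intro h0
  rw [h0, nonpos_iff_eq_zero, ENNReal.coe_eq_zero] at h2
  exact (mul_pos hb hs).ne' h2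

lemma delta2_iterate {φ : ℝ≥0∞ → ℝ≥0∞} {M : ℝ≥0}
    (hM : ∀ s : ℝ≥0, 0 < s → φ ((2 * s : ℝ≥0) : ℝ≥0∞) ≤ (M : ℝ≥0∞) * φ (s : ℝ≥0∞))
    (m : ℕ) {s : ℝ≥0} (hs : 0 < s) :
    φ ((2 ^ m * s : ℝ≥0) : ℝ≥0∞) ≤ (M : ℝ≥0∞) ^ m * φ s := by
  induction m with
  | zero => simp
  | succ m ih =>
    rw [pow_succ', mul_assoc, pow_succ', mul_assoc]
    refine (hM _ (by positivity)).trans ?_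
    gcongr

/-- By concavity of `φ⁻¹`, scaling the weight integral by `k ≥ 1` scales `1/φ⁻¹(1/·)` by at
most `k`. -/
lemma inv_orliczInv_le {φ : ℝ≥0∞ → ℝ≥0∞} (hφ : IsOrliczFunction φ) {k : ℝ≥0} (hk : 1 ≤ k)
    {W W₀ : ℝ≥0∞} (h : W ≤ k * W₀) :
    (orliczInv φ W⁻¹)⁻¹ ≤ k * (orliczInv φ W₀⁻¹)⁻¹ := by
  have hk0 : k ≠ 0 := (one_pos.trans_le hk).ne'
  have hk0' : (k : ℝ≥0∞) ≠ 0 := by exact_mod_cast hk0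
  have hu : (k : ℝ≥0∞)⁻¹ * W₀⁻¹ ≤ W⁻¹ := by
    rw [← ENNReal.mul_inv (.inl hk0') (.inl ENNReal.coe_ne_top)]
    exact ENNReal.inv_le_inv.mpr h
  have key : (k : ℝ≥0∞)⁻¹ * orliczInv φ W₀⁻¹ ≤ orliczInv φ W⁻¹ := by
    rw [ENNReal.inv_mul_le_iff hk0' ENNReal.coe_ne_top]
    refine iSup₂_le fun s hs => ?_
    have h1 : φ ((k⁻¹ * s : ℝ≥0) : ℝ≥0∞) ≤ W⁻¹ := by
      refine (hφ.map_mul_le _ s (inv_le_one_of_one_le₀ hk)).trans (le_trans ?_ hu)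
      rw [ENNReal.coe_inv hk0]
      gcongr
    calc (s : ℝ≥0∞) = k * ((k⁻¹ * s : ℝ≥0) : ℝ≥0∞) := by
          rw [← ENNReal.coe_mul, mul_inv_cancel_left₀ hk0]
      _ ≤ k * orliczInv φ W⁻¹ := by gcongr; exact le_orliczInv h1
  calc (orliczInv φ W⁻¹)⁻¹ ≤ ((k : ℝ≥0∞)⁻¹ * orliczInv φ W₀⁻¹)⁻¹ := ENNReal.inv_le_inv.mpr key
    _ = k * (orliczInv φ W₀⁻¹)⁻¹ := by
      rw [ENNReal.mul_inv (.inl (by simp)) (.inl (by simpa using hk0)), inv_inv]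

/-- The Δ₂-condition turns a bound on `1/φ⁻¹(1/·)` back into one on the weight integral; the new
constant depends on `k` only through an exponent `m` with `2k < 2ᵐ`. -/
lemma weight_le_of_inv_orliczInv_le {φ : ℝ≥0∞ → ℝ≥0∞} (hφ : IsOrliczFunction φ) {M : ℝ≥0}
    (hM0 : 0 < M)
    (hM : ∀ s : ℝ≥0, 0 < s → φ ((2 * s : ℝ≥0) : ℝ≥0∞) ≤ (M : ℝ≥0∞) * φ (s : ℝ≥0∞))
    {k : ℝ≥0} (hk : 0 < k) {m : ℕ} (hm : 2 * k < 2 ^ m)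
    {W W₀ : ℝ≥0∞} (h0 : W₀ ≠ 0) (htop : W₀ ≠ ⊤)
    (h : (orliczInv φ W⁻¹)⁻¹ ≤ k * (orliczInv φ W₀⁻¹)⁻¹) :
    W ≤ ((M ^ m : ℝ≥0) : ℝ≥0∞) * W₀ := by
  have hne := orliczInv_ne_zero hφ (ENNReal.inv_ne_zero.mpr htop)
  have hnt := orliczInv_ne_top hφ (ENNReal.inv_ne_top.mpr h0)
  have hkey : (k : ℝ≥0∞)⁻¹ * orliczInv φ W₀⁻¹ ≤ orliczInv φ W⁻¹ := by
    rw [← ENNReal.inv_le_inv, ENNReal.mul_inv (.inl (by simp)) (.inl (by simpa using hk.ne')),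
      inv_inv]
    exact h
  obtain ⟨s₀, hs₀⟩ : ∃ s₀ : ℝ≥0, (s₀ : ℝ≥0∞) = orliczInv φ W₀⁻¹ :=
    ⟨_, ENNReal.coe_toNNReal hnt⟩
  rw [← hs₀] at hkey hne
  have hs₀pos : 0 < s₀ := pos_iff_ne_zero.mpr (by exact_mod_cast hne)
  set s₁ : ℝ≥0 := 2 * s₀ / 2 ^ m with hs₁
  have hs₁pos : 0 < s₁ := by positivity
  have hlt : s₁ < k⁻¹ * s₀ := by
    rw [hs₁, div_lt_iff₀ (by positivity), mul_assoc, ← div_eq_inv_mul, lt_div_iff₀ hk]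
    calc 2 * s₀ * k = s₀ * (2 * k) := by ring
      _ < s₀ * 2 ^ m := by gcongr
  have h1 : φ s₁ ≤ W⁻¹ := by
    refine le_of_lt_orliczInv hφ (lt_of_lt_of_le ?_ hkey)
    rw [← ENNReal.coe_inv hk.ne', ← ENNReal.coe_mul]
    exact_mod_cast hlt
  have h2 : W₀⁻¹ ≤ φ ((2 ^ m * s₁ : ℝ≥0) : ℝ≥0∞) := by
    rw [hs₁, mul_div_cancel₀ _ (by positivity)]
    -- Otherwise `2 s₀ ≤ φ⁻¹(1/W₀) = s₀`.
    by_contra! hcon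
    have h3 := le_orliczInv hcon.le
    rw [← hs₀, ENNReal.coe_le_coe, two_mul] at h3
    exact absurd h3 (lt_add_of_pos_right _ hs₀pos).not_ge
  have h3 : W₀⁻¹ ≤ ((M ^ m : ℝ≥0) : ℝ≥0∞) * W⁻¹ := by
    refine h2.trans ((delta2_iterate hM m hs₁pos).trans ?_)
    rw [ENNReal.coe_pow]
    gcongr
  have hMm : ((M ^ m : ℝ≥0) : ℝ≥0∞) ≠ 0 := by exact_mod_cast (pow_pos hM0 m).ne'
  rw [← ENNReal.inv_le_inv, ENNReal.mul_inv (.inl hMm) (.inl ENNReal.coe_ne_top)]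
  exact (ENNReal.inv_mul_le_iff hMm ENNReal.coe_ne_top).mpr h3

lemma weightInt_ne_zero {X : Type*} [MeasurableSpace X] {μ : Measure X} {h : ℝ → ℝ≥0∞}
    (hh : IsWeight μ h) {A : Set X} (hA0 : 0 < μ A) (hAfin : μ A < ⊤) :
    weightInt h (μ A) ≠ 0 := by
  refine ne_of_gt ?_
  rw [weightInt, setLIntegral_pos_iff hh.measurable]
  have hpos : 0 < (μ A).toReal := ENNReal.toReal_pos hA0.ne' hAfin.ne
  refine lt_of_lt_of_le ?_ (measure_mono (s := Set.Ioo 0 (μ A).toReal) ?_)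
  · rw [Real.volume_Ioo, sub_zero]
    exact ENNReal.ofReal_pos.mpr hpos
  · rintro t ⟨ht0, ht⟩
    have hlt : ENNReal.ofReal t < μ A := (ENNReal.ofReal_lt_iff_lt_toReal ht0.le hAfin.ne).mpr ht
    exact ⟨(hh.pos t ht0.le (hlt.le.trans (measure_mono (subset_univ A)))).ne', ht0, hlt⟩

lemma weightInt_ne_top {X : Type*} [MeasurableSpace X] {μ : Measure X} {h : ℝ → ℝ≥0∞}
    (hh : IsWeight μ h) {A : Set X} (hAfin : μ A < ⊤) : weightInt h (μ A) ≠ ⊤ := by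
  have hle : ENNReal.ofReal (μ A).toReal ≤ μ Set.univ := by
    rw [ENNReal.ofReal_toReal hAfin.ne]
    exact measure_mono (subset_univ A)
  refine ((lintegral_mono_set ?_).trans_lt
    (hh.locally_integrable (μ A).toReal ENNReal.toReal_nonneg hle)).ne
  rintro t ⟨ht0, ht⟩
  exact ⟨ht0, ((ENNReal.ofReal_lt_iff_lt_toReal ht0.le hAfin.ne).mp ht).le⟩

/-- Equivalence of the normalized and unnormalized weight-integral growth conditions
along the backward orbit of a set. -/
theorem stmt_0 {X : Type*} [MeasurableSpace X] (μ : Measure X) (τ : X → X)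
    (φ : ℝ≥0∞ → ℝ≥0∞) (h : ℝ → ℝ≥0∞)
    (hτ : NonSingular μ τ) (hφ : IsOrliczFunction φ) (hΔ : Delta2All φ)
    (hh : IsWeight μ h)
    (A : Set X) (hA : MeasurableSet A) (hA0 : 0 < μ A) (hAfin : μ A < ⊤) :
    (∃ k : ℝ≥0, 0 < k ∧ ∀ n : ℕ,
        (orliczInv φ (weightInt h (μ ((τ^[n]) ⁻¹' A)))⁻¹)⁻¹
          ≤ (k : ℝ≥0∞) * (orliczInv φ (weightInt h (μ A))⁻¹)⁻¹) ↔
    (∃ k : ℝ≥0, 0 < k ∧ ∀ n : ℕ,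
        weightInt h (μ ((τ^[n]) ⁻¹' A)) ≤ (k : ℝ≥0∞) * weightInt h (μ A)) := by
  constructor
  · rintro ⟨k, hk, H⟩
    obtain ⟨M, hM0, hM⟩ := hΔ
    obtain ⟨m, hm⟩ := pow_unbounded_of_one_lt (2 * k) (one_lt_two : (1 : ℝ≥0) < 2)
    exact ⟨M ^ m, pow_pos hM0 m, fun n => weight_le_of_inv_orliczInv_le hφ hM0 hM hk hm
      (weightInt_ne_zero hh hA0 hAfin) (weightInt_ne_top hh hAfin) (H n)⟩
  · rintro ⟨k, -, H⟩
    refine ⟨max k 1, lt_max_of_lt_right one_pos, fun n =>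
      inv_orliczInv_le hφ (le_max_right k 1) ((H n).trans ?_)⟩
    gcongr
    exact le_max_left k 1

end
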